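/- (Matrix Capelli identity, skew-symmetric form.) Let R be a Hecke symmetry with parameter q such that j_q ≠ 0 for 2 ≤ j ≤ k, let M and D be N×N matrices with entries in a unital associative ℂ-algebra 𝒜 satisfying the Reflection Equation R M₁ R M₁ = M₁ R M₁ R, the relation R⁻¹ D₁ R⁻¹ D₁ = D₁ R⁻¹ D₁ R⁻¹, and the permutation relations D₁ R M₁ = R M₁ R⁻¹ D₁ R⁻¹ + I, and set L := M D. Then for every k ≥ 1, as an identity of N^k×N^k matrices over 𝒜: A^(k) L_{1̄} (L_{2̄} + q·I) (L_{3̄} + q²·2_q·I) ⋯ (L_{k̄} + q^{k−1}·(k−1)_q·I) A^(k) = q^{k(k−1)} A^(k) M_{1̄} ⋯ M_{k̄} D_{k̄} ⋯ D_{1̄}. -/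

import Mathlib

open Matrix BigOperators

noncomputable section

/-- An `N² × N²` complex matrix, viewed as an operator on `ℂ^N ⊗ ℂ^N`. -/
abbrev RMat (N : ℕ) := Matrix (Fin N × Fin N) (Fin N × Fin N) ℂ

/-- A matrix on the `k`-th tensor power of `ℂ^N`, with entries in `A`. -/
abbrev TMat (N k : ℕ) (A : Type _) := Matrix (Fin k → Fin N) (Fin k → Fin N) A

/-- The `q`-number `j_q = (q^j - q^{-j})/(q - q^{-1})`. -/
def qNum (q : ℂ) (j : ℕ) : ℂ := (q ^ j - q⁻¹ ^ j) / (q - q⁻¹)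

/-- Embedding of an `N²×N²` matrix `R` into the `k`-th tensor power,
acting in the (0-based) tensor factors `i` and `i+1`.  The paper's `R_i`
(1-based) is `embR k R (i-1)`. -/
def embR {N : ℕ} (k : ℕ) (R : RMat N) (i : ℕ) : TMat N k ℂ := fun f g =>
  if h : i + 1 < k then
    if ∀ j : Fin k, j.val ≠ i → j.val ≠ i + 1 → f j = g j then
      R (f ⟨i, Nat.lt_of_succ_lt h⟩, f ⟨i + 1, h⟩) (g ⟨i, Nat.lt_of_succ_lt h⟩, g ⟨i + 1, h⟩)
    else 0
  else (1 : TMat N k ℂ) f g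

/-- `X ⊗ I^{⊗(k-1)}` : the first copy `X_{1̄}` of an `N×N` matrix over `A`. -/
def emb1 {N : ℕ} (k : ℕ) {A : Type _} [Ring A] (X : Matrix (Fin N) (Fin N) A) :
    TMat N k A := fun f g =>
  if h : 0 < k then
    if ∀ j : Fin k, j.val ≠ 0 → f j = g j then X (f ⟨0, h⟩) (g ⟨0, h⟩) else 0
  else (1 : TMat N k A) f g

/-- Lift a complex matrix to a matrix over the `ℂ`-algebra `A`. -/
def liftC {N k : ℕ} (A : Type _) [Ring A] [Algebra ℂ A] (X : TMat N k ℂ) : TMat N k A :=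
  X.map (algebraMap ℂ A)

/-- The copies `X_{1̄}, X_{2̄}, …` of `X` in the `k`-th tensor power:
`copyX k R Rinv X i` is the paper's `X_{\overline{i+1}}`, i.e.
`X_{1̄} = X ⊗ I^{⊗(k-1)}` and `X_{\overline{i+1}} = R_i X_{ī} R_i⁻¹`. -/
def copyX {N : ℕ} (k : ℕ) (R Rinv : RMat N) {A : Type _} [Ring A] [Algebra ℂ A]
    (X : Matrix (Fin N) (Fin N) A) : ℕ → TMat N k A
  | 0 => emb1 k X
  | i + 1 => liftC A (embR k R i) * copyX k R Rinv X i * liftC A (embR k Rinv i)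

/-- The `R`-skew-symmetrizers, on the ambient `k`-th tensor power:
`Asym k R q j` is `A^{(j)}` (acting in the first `j` factors). -/
def Asym {N : ℕ} (k : ℕ) (R : RMat N) (q : ℂ) : ℕ → TMat N k ℂ
  | 0 => 1
  | 1 => 1
  | j + 2 =>
      (qNum q (j + 2))⁻¹ •
        (Asym k R q (j + 1) *
          ((q ^ (j + 1)) • (1 : TMat N k ℂ) - (qNum q (j + 1)) • embR k R j) *
          Asym k R q (j + 1))

/-- The `R`-symmetrizers, on the ambient `k`-th tensor power:
`Ssym k R q j` is `S^{(j)}` (acting in the first `j` factors). -/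
def Ssym {N : ℕ} (k : ℕ) (R : RMat N) (q : ℂ) : ℕ → TMat N k ℂ
  | 0 => 1
  | 1 => 1
  | j + 2 =>
      (qNum q (j + 2))⁻¹ •
        (Ssym k R q (j + 1) *
          ((q⁻¹ ^ (j + 1)) • (1 : TMat N k ℂ) + (qNum q (j + 1)) • embR k R j) *
          Ssym k R q (j + 1))

/-- The braid relation `R₁₂ R₂₃ R₁₂ = R₂₃ R₁₂ R₂₃` on `(ℂ^N)^{⊗3}`. -/
def IsBraiding {N : ℕ} (R : RMat N) : Prop :=
  embR 3 R 0 * embR 3 R 1 * embR 3 R 0 = embR 3 R 1 * embR 3 R 0 * embR 3 R 1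

/-- The Hecke condition `(q·I − R)(q⁻¹·I + R) = 0`. -/
def HeckeCond {N : ℕ} (R : RMat N) (q : ℂ) : Prop :=
  (q • (1 : RMat N) - R) * (q⁻¹ • (1 : RMat N) + R) = 0

/-- The Reflection Equation `R M₁ R M₁ = M₁ R M₁ R` (on `(ℂ^N)^{⊗2}`,
with entries in `A`). -/
def RERel {N : ℕ} (R : RMat N) {A : Type _} [Ring A] [Algebra ℂ A]
    (M : Matrix (Fin N) (Fin N) A) : Prop :=
  liftC A (embR 2 R 0) * emb1 2 M * liftC A (embR 2 R 0) * emb1 2 M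
    = emb1 2 M * liftC A (embR 2 R 0) * emb1 2 M * liftC A (embR 2 R 0)

/-- The relation `R⁻¹ D₁ R⁻¹ D₁ = D₁ R⁻¹ D₁ R⁻¹` on the matrix `D`,
where `Rinv = R⁻¹`. -/
def DDRel {N : ℕ} (Rinv : RMat N) {A : Type _} [Ring A] [Algebra ℂ A]
    (D : Matrix (Fin N) (Fin N) A) : Prop :=
  liftC A (embR 2 Rinv 0) * emb1 2 D * liftC A (embR 2 Rinv 0) * emb1 2 D
    = emb1 2 D * liftC A (embR 2 Rinv 0) * emb1 2 D * liftC A (embR 2 Rinv 0)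

/-- The permutation relations `D₁ R M₁ = R M₁ R⁻¹ D₁ R⁻¹ + I`, where `Rinv = R⁻¹`. -/
def PermRel {N : ℕ} (R Rinv : RMat N) {A : Type _} [Ring A] [Algebra ℂ A]
    (M D : Matrix (Fin N) (Fin N) A) : Prop :=
  emb1 2 D * liftC A (embR 2 R 0) * emb1 2 M
    = liftC A (embR 2 R 0) * emb1 2 M * liftC A (embR 2 Rinv 0) * emb1 2 D *
        liftC A (embR 2 Rinv 0) + 1

/-- `Ψ` is the skew-inverse of `R`:  `Σ_{j,b} R^{ij}_{ab} Ψ^{bc}_{jd} = δ^i_d δ^c_a`. -/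
def SkewInv {N : ℕ} (R Ψ : RMat N) : Prop :=
  ∀ i a c d : Fin N,
    (∑ j : Fin N, ∑ b : Fin N, R (i, j) (a, b) * Ψ (b, c) (j, d))
      = if i = d ∧ c = a then 1 else 0

/-- The matrix `C`, `C^c_d = Σ_i Ψ^{ic}_{id}`. -/
def Cmat {N : ℕ} (Ψ : RMat N) : Matrix (Fin N) (Fin N) ℂ :=
  fun c d => ∑ i : Fin N, Ψ (i, c) (i, d)

/-- The `R`-trace over all `k` tensor factors: `⟨X⟩_{1…k} = Tr(C^{⊗k} X)`. -/
def rTr {N k : ℕ} {A : Type _} [Ring A] [Algebra ℂ A] (C : Matrix (Fin N) (Fin N) ℂ)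
    (X : TMat N k A) : A :=
  ∑ f : Fin k → Fin N, ∑ g : Fin k → Fin N, (∏ j : Fin k, C (f j) (g j)) • X g f

/-- The chain `X_{1̄} X_{2̄} ⋯ X_{n̄}`. -/
def upChain {N : ℕ} (k : ℕ) (R Rinv : RMat N) {A : Type _} [Ring A] [Algebra ℂ A]
    (X : Matrix (Fin N) (Fin N) A) (n : ℕ) : TMat N k A :=
  ((List.range n).map (copyX k R Rinv X)).prod

/-- The reversed chain `X_{n̄} X_{\overline{n-1}} ⋯ X_{1̄}`. -/
def downChain {N : ℕ} (k : ℕ) (R Rinv : RMat N) {A : Type _} [Ring A] [Algebra ℂ A]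
    (X : Matrix (Fin N) (Fin N) A) (n : ℕ) : TMat N k A :=
  ((List.range n).reverse.map (copyX k R Rinv X)).prod

/-- The Capelli chain `L_{1̄}(L_{2̄} + q·1_q I)(L_{3̄} + q²·2_q I) ⋯ (L_{n̄} + q^{n-1}·(n-1)_q I)`
(note `0_q = 0`). -/
def capChainA {N : ℕ} (k : ℕ) (R Rinv : RMat N) (q : ℂ) {A : Type _} [Ring A] [Algebra ℂ A]
    (L : Matrix (Fin N) (Fin N) A) (n : ℕ) : TMat N k A :=
  ((List.range n).map
    (fun i => copyX k R Rinv L i + ((q ^ i) * qNum q i) • (1 : TMat N k A))).prod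

/-- The symmetric Capelli chain
`L_{1̄}(L_{2̄} - q⁻¹·1_q I) ⋯ (L_{n̄} - q^{-(n-1)}·(n-1)_q I)`. -/
def capChainS {N : ℕ} (k : ℕ) (R Rinv : RMat N) (q : ℂ) {A : Type _} [Ring A] [Algebra ℂ A]
    (L : Matrix (Fin N) (Fin N) A) (n : ℕ) : TMat N k A :=
  ((List.range n).map
    (fun i => copyX k R Rinv L i - ((q⁻¹ ^ i) * qNum q i) • (1 : TMat N k A))).prod

/-- The descending chain `R_{a→b} = R_a R_{a-1} ⋯ R_b` (1-based indices;
identity when `b > a`). -/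
def rChainDesc {N : ℕ} (k : ℕ) (R : RMat N) (a b : ℕ) : TMat N k ℂ :=
  ((List.range' b (a + 1 - b)).reverse.map (fun j => embR k R (j - 1))).prod

/-- The ascending chain `R_{b→a} = R_b R_{b+1} ⋯ R_a` (1-based indices;
identity when `b > a`). -/
def rChainAsc {N : ℕ} (k : ℕ) (R : RMat N) (b a : ℕ) : TMat N k ℂ :=
  ((List.range' b (a + 1 - b)).map (fun j => embR k R (j - 1))).prod

/-- Abstract relations in a `ℂ`-algebra: Hecke-type generators `r i` and two elements `m`, `d`. -/
structure HRel {B : Type*} [Ring B] [Algebra ℂ B] (K : ℕ) (q : ℂ) (r r' : ℕ → B) : Prop where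
  inv : ∀ i, r i * r' i = 1
  inv' : ∀ i, r' i * r i = 1
  comm : ∀ i j, i + 1 < j → Commute (r i) (r j)
  braid : ∀ i, i + 2 < K → r i * r (i + 1) * r i = r (i + 1) * r i * r (i + 1)
  hecke : ∀ i, i + 1 < K → r i * r i = (q - q⁻¹) • r i + 1

def cp {B : Type*} [Ring B] (r r' : ℕ → B) (x : B) : ℕ → B
  | 0 => x
  | i + 1 => r i * cp r r' x i * r' i

def dn {B : Type*} [Ring B] (r r' : ℕ → B) (x : B) : ℕ → B
  | 0 => 1
  | i + 1 => cp r r' x i * dn r r' x i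

def upc {B : Type*} [Ring B] (r r' : ℕ → B) (x : B) : ℕ → B
  | 0 => 1
  | i + 1 => upc r r' x i * cp r r' x i

def cpl {B : Type*} [Ring B] [Algebra ℂ B] (q : ℂ) (r r' : ℕ → B) (x : B) : ℕ → B
  | 0 => 1
  | i + 1 => cpl q r r' x i * (cp r r' x i + (q ^ i * qNum q i) • (1 : B))

def asy {B : Type*} [Ring B] [Algebra ℂ B] (q : ℂ) (r : ℕ → B) : ℕ → B
  | 0 => 1
  | 1 => 1
  | j + 2 => (qNum q (j + 2))⁻¹ • (asy q r (j + 1) *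
          ((q ^ (j + 1)) • (1 : B) - (qNum q (j + 1)) • r j) * asy q r (j + 1))

section abstractPart

variable {B : Type*} [Ring B] [Algebra ℂ B] {K : ℕ} {q : ℂ} {r r' : ℕ → B}

theorem commute_inv {a b b' : B} (h1 : b * b' = 1) (h2 : b' * b = 1) (h : Commute a b) :
    Commute a b' := by
  have : a * b' = b' * (a * b) * b' := by rw [h.eq, ← mul_assoc, h2, one_mul]
  show a * b' = b' * a
  rw [this, mul_assoc, mul_assoc, h1, mul_one]

theorem qNum_succ (q : ℂ) (h0 : q ≠ 0) (h : q - q⁻¹ ≠ 0) (j : ℕ) :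
    q ^ j + q⁻¹ * qNum q j = qNum q (j + 1) := by
  unfold qNum
  have : q ^ j * q⁻¹ ^ j = 1 := by rw [← mul_pow, mul_inv_cancel₀ h0, one_pow]
  rw [eq_div_iff h, add_mul, mul_assoc, div_mul_cancel₀ _ h]
  ring

theorem qc_succ (q : ℂ) (h0 : q ≠ 0) (h : q - q⁻¹ ≠ 0) (j : ℕ) :
    q ^ (j + 1) * qNum q (j + 1) = q ^ (2 * j) * q + q ^ j * qNum q j := by
  unfold qNum
  have e : q ^ j * q⁻¹ ^ j = 1 := by rw [← mul_pow, mul_inv_cancel₀ h0, one_pow]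
  have e1 : q * q⁻¹ = 1 := mul_inv_cancel₀ h0
  rw [← mul_div_assoc, ← mul_div_assoc, div_eq_iff h, add_mul, div_mul_cancel₀ _ h]
  have : q ^ (2 * j) = q ^ j * q ^ j := by rw [two_mul, pow_add]
  rw [this]
  linear_combination (-q * q⁻¹ + 1) * e + (q ^ j * q ^ j - 1) * e1

namespace HRel

theorem r_cp_far (H : HRel K q r r') (x : B) (hx : ∀ i, 1 ≤ i → Commute (r i) x) (l : ℕ) :
    ∀ j, l < j → Commute (r j) (cp r r' x l) := by
  induction l with
  | zero => intro j hj; exact hx j hj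
  | succ l ih =>
    intro j hj
    have h1 : Commute (r j) (r l) := (H.comm l j hj).symm
    exact (h1.mul_right (ih j (by omega))).mul_right (commute_inv (H.inv l) (H.inv' l) h1)

theorem r'_far (H : HRel K q r r') {a : B} {j : ℕ} (h : Commute (r j) a) :
    Commute (r' j) a := (commute_inv (H.inv j) (H.inv' j) h.symm).symm

/-- conjugation by `w = r i * r (i+1)` moves `r i` to `r (i+1)`. -/
theorem w_r (H : HRel K q r r') (i : ℕ) (hi : i + 2 < K) :
    r i * r (i + 1) * r i * (r' (i + 1) * r' i) = r (i + 1) := by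
  rw [H.braid i hi, mul_assoc (r (i+1) * r i), ← mul_assoc (r (i+1)) (r' (i+1)), H.inv, one_mul,
    mul_assoc, H.inv, mul_one]

theorem w_r' (H : HRel K q r r') (i : ℕ) (hi : i + 2 < K) :
    r i * r (i + 1) * r' i * (r' (i + 1) * r' i) = r' (i + 1) := by
  have h := H.braid i hi
  have e : r i * r (i + 1) * r' i = r' (i+1) * (r i * r (i+1)) := by
    calc r i * r (i + 1) * r' i
        = r' (i+1) * (r (i+1) * r i * r (i + 1)) * r' i := by
          simp only [← mul_assoc, H.inv', one_mul]
      _ = r' (i+1) * (r i * r (i+1)) := by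
          rw [← h]; simp only [mul_assoc, H.inv, mul_one]
  rw [e]
  simp only [mul_assoc]
  rw [← mul_assoc (r (i+1)) (r' (i+1)), H.inv, one_mul, H.inv, mul_one]

theorem w_cp (H : HRel K q r r') (x : B) (hx : ∀ i, 1 ≤ i → Commute (r i) x) (i : ℕ) :
    r i * r (i + 1) * cp r r' x i * (r' (i + 1) * r' i) = cp r r' x (i + 1) := by
  have h := (H.r_cp_far x hx i (i+1) (by omega)).eq
  rw [mul_assoc (r i), h]
  simp only [cp, mul_assoc]
  rw [← mul_assoc (r (i+1)) (r' (i+1)), H.inv, one_mul]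

theorem r_cp_near (H : HRel K q r r') (x : B) (hx : ∀ i, 1 ≤ i → Commute (r i) x) (j l : ℕ)
    (hl : j + 2 + l < K) : Commute (r j) (cp r r' x (j + 2 + l)) := by
  induction l with
  | zero =>
    have hb := H.braid j (by omega)
    have h := H.r_cp_far x hx j (j+1) (by omega)
    have e1 : r j * (r (j+1) * r j) = r (j+1) * r j * r (j+1) := by rw [← mul_assoc]; exact hb
    have e2 : r (j+1) * (r' j * r' (j+1)) = r' j * r' (j+1) * r j := by
      have := H.w_r' j (by omega)
      have hw := H.w_r j (by omega)
      calc r (j+1) * (r' j * r' (j+1))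
          = r' j * (r j * r (j+1) * r' j * (r' (j+1) * r' j)) * r j := by
            rw [this]
            have e3 : r' j * r' (j+1) * r j = r (j+1) * (r' j * r' (j+1)) := by
              calc r' j * r' (j+1) * r j
                  = r' j * r' (j+1) * (r j * r (j + 1) * r j) * (r' j * r' (j+1)) := by
                    simp only [mul_assoc]
                    rw [← mul_assoc (r j) (r' j) , H.inv, one_mul, H.inv, mul_one]
                _ = r (j+1) * (r' j * r' (j+1)) := by
                    rw [hb]
                    simp only [mul_assoc]
                    rw [← mul_assoc (r' (j+1)) (r (j+1)), H.inv', one_mul,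
                      ← mul_assoc (r' j) (r j), H.inv', one_mul]
            exact e3.symm
        _ = r' j * r' (j+1) * r j := by rw [this]
    show r j * (r (j+1) * (r j * cp r r' x j * r' j) * r' (j+1))
      = r (j+1) * (r j * cp r r' x j * r' j) * r' (j+1) * r j
    calc r j * (r (j+1) * (r j * cp r r' x j * r' j) * r' (j+1))
        = (r j * (r (j+1) * r j)) * cp r r' x j * (r' j * r' (j+1)) := by
          simp only [mul_assoc]
      _ = r (j+1) * r j * (r (j+1) * cp r r' x j) * (r' j * r' (j+1)) := by
          rw [e1]; simp only [mul_assoc]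
      _ = r (j+1) * r j * cp r r' x j * (r (j+1) * (r' j * r' (j+1))) := by
          rw [h.eq]; simp only [mul_assoc]
      _ = _ := by rw [e2]; simp only [mul_assoc]
  | succ l ih =>
    have h1 : Commute (r j) (r (j + 2 + l)) := H.comm j _ (by omega)
    exact (h1.mul_right (ih (by omega))).mul_right (commute_inv (H.inv _) (H.inv' _) h1)

theorem r_cp (H : HRel K q r r') (x : B) (hx : ∀ i, 1 ≤ i → Commute (r i) x) (j l : ℕ)
    (hl : l < K) (h1 : l ≠ j) (h2 : l ≠ j + 1) : Commute (r j) (cp r r' x l) := by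
  rcases lt_or_ge l j with h | h
  · exact H.r_cp_far x hx l j h
  · obtain ⟨m, rfl⟩ := Nat.exists_eq_add_of_le (show j + 2 ≤ l by omega)
    exact H.r_cp_near x hx j m hl

/-- Transport helper: conjugation of a product. -/
theorem conj_mul {w w' a b : B} (h : w' * w = 1) : w * (a * b) * w' = (w * a * w') * (w * b * w') := by
  simp only [mul_assoc]
  rw [← mul_assoc w' w, h, one_mul]

theorem w_inv' (H : HRel K q r r') (i j : ℕ) : (r' j * r' i) * (r i * r j) = 1 := by
  rw [mul_assoc, ← mul_assoc (r' i), H.inv', one_mul, H.inv']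

theorem w_inv (H : HRel K q r r') (i j : ℕ) : (r i * r j) * (r' j * r' i) = 1 := by
  rw [mul_assoc, ← mul_assoc (r j), H.inv, one_mul, H.inv]

theorem re (H : HRel K q r r') (x : B) (hx : ∀ i, 1 ≤ i → Commute (r i) x)
    (h0 : 1 < K → r 0 * x * r 0 * x = x * r 0 * x * r 0) (i : ℕ) (hi : i + 1 < K) :
    r i * cp r r' x i * r i * cp r r' x i = cp r r' x i * r i * cp r r' x i * r i := by
  induction i with
  | zero => exact h0 (by omega)
  | succ i ih =>
    have h := congrArg (fun z => (r i * r (i+1)) * z * (r' (i+1) * r' i)) (ih (by omega))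
    simpa only [conj_mul (H.w_inv' i (i+1)), H.w_r i (by omega), H.w_cp x hx i] using h

theorem dd (H : HRel K q r r') (x : B) (hx : ∀ i, 1 ≤ i → Commute (r i) x)
    (h0 : 1 < K → r' 0 * x * r' 0 * x = x * r' 0 * x * r' 0) (i : ℕ) (hi : i + 1 < K) :
    r' i * cp r r' x i * r' i * cp r r' x i = cp r r' x i * r' i * cp r r' x i * r' i := by
  induction i with
  | zero => exact h0 (by omega)
  | succ i ih =>
    have h := congrArg (fun z => (r i * r (i+1)) * z * (r' (i+1) * r' i)) (ih (by omega))
    simpa only [conj_mul (H.w_inv' i (i+1)), H.w_r' i (by omega), H.w_cp x hx i] using h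

theorem perm (H : HRel K q r r') (m d : B) (hm : ∀ i, 1 ≤ i → Commute (r i) m)
    (hd : ∀ i, 1 ≤ i → Commute (r i) d)
    (h0 : 1 < K → d * r 0 * m = r 0 * m * r' 0 * d * r' 0 + 1) (i : ℕ) (hi : i + 1 < K) :
    cp r r' d i * r i * cp r r' m i
      = r i * cp r r' m i * r' i * cp r r' d i * r' i + 1 := by
  induction i with
  | zero => exact h0 (by omega)
  | succ i ih =>
    have h := congrArg (fun z => (r i * r (i+1)) * z * (r' (i+1) * r' i)) (ih (by omega))
    simpa only [mul_add, add_mul, mul_one, H.w_inv, conj_mul (H.w_inv' i (i+1)),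
      H.w_r i (by omega), H.w_r' i (by omega),
      H.w_cp m hm i, H.w_cp d hd i] using h

theorem cp_mul (H : HRel K q r r') (m d : B) (n : ℕ) :
    cp r r' (m * d) n = cp r r' m n * cp r r' d n := by
  induction n with
  | zero => rfl
  | succ n ih => simp only [cp, ih]; exact conj_mul (H.inv' n)

theorem r'_eig (H : HRel K q r r') (hq : q ≠ 0) {b : B} {j : ℕ} (h : r j * b = (-q⁻¹) • b) :
    r' j * b = (-q) • b := by
  have : r' j * (r j * b) = b := by rw [← mul_assoc, H.inv', one_mul]
  rw [h, mul_smul_comm] at this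
  conv_rhs => rw [← this]
  rw [smul_smul, neg_mul_neg, mul_inv_cancel₀ hq, one_smul]

theorem d2_comm (H : HRel K q r r') (d : B) (i : ℕ)
    (h : r' i * cp r r' d i * r' i * cp r r' d i = cp r r' d i * r' i * cp r r' d i * r' i) :
    Commute (r i) (cp r r' d (i+1) * cp r r' d i) := by
  set D := cp r r' d i with hD
  have e : D * r' i * D * r i = r i * D * r' i * D := by
    calc D * r' i * D * r i = r i * (r' i * D * r' i * D) * r i := by
          simp only [← mul_assoc, H.inv, one_mul]
      _ = _ := by rw [h]; simp only [mul_assoc, H.inv', mul_one]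
  show r i * (r i * D * r' i * D) = r i * D * r' i * D * r i
  rw [mul_assoc (r i * D), mul_assoc (r i), mul_assoc (r i), ← mul_assoc D, e]
  simp only [mul_assoc]

theorem m2_comm (H : HRel K q r r') (m : B) (i : ℕ)
    (h : r i * cp r r' m i * r i * cp r r' m i = cp r r' m i * r i * cp r r' m i * r i) :
    Commute (r i) (cp r r' m i * cp r r' m (i+1)) := by
  set D := cp r r' m i with hD
  show r i * (D * (r i * D * r' i)) = D * (r i * D * r' i) * r i
  calc r i * (D * (r i * D * r' i)) = (r i * D * r i * D) * r' i := by simp only [mul_assoc]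
    _ = D * (r i * D * r' i) * r i := by
      rw [h]; simp only [mul_assoc, H.inv, H.inv']

theorem key (H : HRel K q r r') (hq : q ≠ 0) (m d : B) (hd : ∀ i, 1 ≤ i → Commute (r i) d)
    (i : ℕ)
    (hdd : r' i * cp r r' d i * r' i * cp r r' d i = cp r r' d i * r' i * cp r r' d i * r' i)
    (hp : cp r r' d i * r i * cp r r' m i
      = r i * cp r r' m i * r' i * cp r r' d i * r' i + 1)
    (l : ℕ) : ∀ b : B, (∀ j, i ≤ j → j < i + 1 + l → r j * b = (-q⁻¹) • b) →
      cp r r' d i * (cp r r' (m * d) (i + 1 + l) * b)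
        = (q ^ 2) • (cp r r' (m * d) (i + 1 + l) * (cp r r' d i * b))
          - q • (cp r r' d i * b) := by
  induction l with
  | zero =>
    intro b hb
    have hr := hb i le_rfl (by omega)
    have hr' := H.r'_eig hq hr
    have hc := H.d2_comm d i hdd
    have e2 : cp r r' d i * (r' i * (cp r r' d i * b))
        = (-q) • (cp r r' d (i+1) * (cp r r' d i * b)) := by
      have h3 : r' i * (cp r r' d (i+1) * cp r r' d i) * b
          = (-q) • (cp r r' d (i+1) * (cp r r' d i * b)) := by
        rw [(H.r'_far hc).eq, mul_assoc, hr', mul_smul_comm, mul_assoc]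
      rw [← h3]
      simp only [cp, ← mul_assoc, H.inv', one_mul]
    show cp r r' d i * (cp r r' (m*d) (i+1) * b) = (q ^ 2) • (cp r r' (m*d) (i+1) *
      (cp r r' d i * b)) - q • (cp r r' d i * b)
    have e3 : cp r r' d i * (cp r r' (m*d) (i+1) * b)
      = (cp r r' d i * r i * cp r r' m i) * (cp r r' d i * (r' i * b)) := by
      simp only [cp, H.cp_mul m d i, mul_assoc]
    rw [e3, hp, hr', add_mul, one_mul, H.cp_mul m d (i+1)]
    have e4 : r i * cp r r' m i * r' i * cp r r' d i * r' i * (cp r r' d i * (-q) • b)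
        = (-q) • (cp r r' m (i+1) * (cp r r' d i * (r' i * (cp r r' d i * b)))) := by
      simp only [cp, mul_assoc, mul_smul_comm]
    rw [e4, e2]
    simp only [mul_smul_comm, mul_assoc]
    module
  | succ l ih =>
    intro b hb
    have hr := hb (i+1+l) (by omega) (by omega)
    have hr' := H.r'_eig hq hr
    have hc := H.r_cp_far d hd i (i+1+l) (by omega)
    have hrd : r (i+1+l) * (cp r r' d i * b) = (-q⁻¹) • (cp r r' d i * b) := by
      rw [← mul_assoc, hc.eq, mul_assoc, hr, mul_smul_comm]
    have hrd' := H.r'_eig hq hrd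
    have ih' := ih b (fun j h1 h2 => hb j h1 (by omega))
    show cp r r' d i * (r (i+1+l) * cp r r' (m*d) (i+1+l) * r' (i+1+l) * b)
      = (q^2) • (r (i+1+l) * cp r r' (m*d) (i+1+l) * r' (i+1+l) * (cp r r' d i * b)) - _
    rw [mul_assoc _ (r' (i+1+l)), mul_assoc _ (r' (i+1+l)), hr', hrd', mul_assoc, ← mul_assoc,
      ← hc.eq]
    simp only [mul_smul_comm, mul_assoc]
    rw [ih']
    simp only [mul_sub, mul_smul_comm, hrd, smul_sub, smul_smul]
    congr 2
    · ring
    · field_simp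

theorem r_dn_far (H : HRel K q r r') (d : B) (hd : ∀ i, 1 ≤ i → Commute (r i) d) (n : ℕ) :
    ∀ j, n ≤ j → Commute (r j) (dn r r' d n) := by
  induction n with
  | zero => intro j _; exact Commute.one_right _
  | succ n ih => intro j hj; exact (H.r_cp_far d hd n j (by omega)).mul_right (ih j (by omega))

theorem r_up_far (H : HRel K q r r') (d : B) (hd : ∀ i, 1 ≤ i → Commute (r i) d) (n : ℕ) :
    ∀ j, n ≤ j → Commute (r j) (upc r r' d n) := by
  induction n with
  | zero => intro j _; exact Commute.one_right _
  | succ n ih => intro j hj; exact (ih j (by omega)).mul_right (H.r_cp_far d hd n j (by omega))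

theorem r_dn (H : HRel K q r r') (d : B) (hd : ∀ i, 1 ≤ i → Commute (r i) d)
    (h0 : 1 < K → r' 0 * d * r' 0 * d = d * r' 0 * d * r' 0) (j l : ℕ) (hl : j + 2 + l ≤ K) :
    Commute (r j) (dn r r' d (j + 2 + l)) := by
  induction l with
  | zero =>
    show Commute (r j) (cp r r' d (j+1) * (cp r r' d j * dn r r' d j))
    rw [← mul_assoc]
    exact (H.d2_comm d j (H.dd d hd h0 j (by omega))).mul_right (H.r_dn_far d hd j j le_rfl)
  | succ l ih =>
    exact (H.r_cp_near d hd j l (by omega)).mul_right (ih (by omega))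

theorem r_up (H : HRel K q r r') (d : B) (hd : ∀ i, 1 ≤ i → Commute (r i) d)
    (h0 : 1 < K → r 0 * d * r 0 * d = d * r 0 * d * r 0) (j l : ℕ) (hl : j + 2 + l ≤ K) :
    Commute (r j) (upc r r' d (j + 2 + l)) := by
  induction l with
  | zero =>
    show Commute (r j) (upc r r' d j * cp r r' d j * cp r r' d (j+1))
    rw [mul_assoc]
    exact (H.r_up_far d hd j j le_rfl).mul_right (H.m2_comm d j (H.re d hd h0 j (by omega)))
  | succ l ih =>
    exact (ih (by omega)).mul_right (H.r_cp_near d hd j l (by omega))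

/-- Anything commuting with the generators commutes with the skew-symmetrizer. -/
theorem asy_comm (x : B) (n : ℕ) (h : ∀ j, j + 1 < n → Commute (r j) x) :
    Commute (asy q r n) x := by
  induction n with
  | zero => exact Commute.one_left _
  | succ n ih =>
    cases n with
    | zero => exact Commute.one_left _
    | succ n =>
      have h1 := ih (fun j hj => h j (by omega))
      have h2 := h n (by omega)
      refine Commute.smul_left ((h1.mul_left (Commute.sub_left ?_ ?_)).mul_left h1) _
      · exact (Commute.one_left _).smul_left _
      · exact h2.smul_left _

theorem asy_fix (hq : q ≠ 0) (hqq : q - q⁻¹ ≠ 0) (x : B) (n : ℕ)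
    (hn : ∀ j, 2 ≤ j → j ≤ n → qNum q j ≠ 0)
    (h : ∀ j, j + 1 < n → r j * x = (-q⁻¹) • x) : asy q r n * x = x := by
  induction n with
  | zero => exact one_mul _
  | succ n ih =>
    cases n with
    | zero => exact one_mul _
    | succ n =>
      have h1 := ih (fun j h1 h2 => hn j h1 (by omega)) (fun j hj => h j (by omega))
      have h2 := h n (by omega)
      have h3 := qNum_succ q hq hqq (n+1)
      simp only [asy, smul_mul_assoc, mul_assoc, h1, sub_mul, one_mul, h2, smul_smul]
      rw [← sub_smul, mul_smul_comm, h1, smul_smul,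
        show q ^ (n+1) - qNum q (n+1) * -q⁻¹ = qNum q (n+1+1) by rw [← h3]; ring,
        inv_mul_cancel₀ (hn (n+2) (by omega) le_rfl), one_smul]

theorem asy_eig (H : HRel K q r r') (hq : q ≠ 0) (hqq : q - q⁻¹ ≠ 0) (n : ℕ) :
    n ≤ K → (∀ j, 2 ≤ j → j ≤ n → qNum q j ≠ 0) →
    ∀ j, j + 1 < n → r j * asy q r n = (-q⁻¹) • asy q r n := by
  induction n with
  | zero => intro _ _ j hj; omega
  | succ n ih =>
    intro hnK hn j hj
    cases n with
    | zero => omega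
    | succ n =>
      have ih' := ih (by omega) (fun j h1 h2 => hn j h1 (by omega))
      rcases Nat.lt_or_ge (j+1) (n+1) with hjn | hjn
      · simp only [asy, mul_smul_comm]
        rw [← mul_assoc, ← mul_assoc, ih' j hjn]
        simp only [smul_mul_assoc]
        rw [smul_comm]
      obtain rfl : j = n := by omega
      have hk := H.hecke j (by omega)
      cases j with
      | zero =>
        have e1 : qNum q 1 = 1 := by simp [qNum, div_self hqq]
        simp only [asy, mul_smul_comm, one_mul, mul_one, zero_add, e1, one_smul, pow_one, mul_sub,
          hk]
        rw [smul_comm]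
        congr 1
        rw [smul_sub, smul_smul, neg_mul, inv_mul_cancel₀ hq]
        module
      | succ p =>
        -- P = asy (p+2), Q = asy (p+1)
        have hk1 : qNum q (p+2) ≠ 0 := hn (p+2) (by omega) (by omega)
        have hP : asy q r (p+2) = (qNum q (p + 2))⁻¹ • (asy q r (p + 1) *
          ((q ^ (p + 1)) • (1 : B) - (qNum q (p + 1)) • r p) * asy q r (p + 1)) := rfl
        have hPP : asy q r (p+2) * asy q r (p+2) = asy q r (p+2) :=
          asy_fix hq hqq _ (p+2) (fun j h1 h2 => hn j h1 (by omega)) ih'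
        have hQP : asy q r (p+1) * asy q r (p+2) = asy q r (p+2) :=
          asy_fix hq hqq _ (p+1) (fun j h1 h2 => hn j h1 (by omega))
            (fun j hj => ih' j (by omega))
        have hQr : Commute (r (p+1)) (asy q r (p+1)) :=
          (asy_comm (q := q) (r (p+1)) (p+1) (fun j hj => H.comm j (p+1) (by omega))).symm
        have ht := ih' p (by omega)
        have hb := H.braid p (by omega)
        set P := asy q r (p+2) with hPdef
        set Q := asy q r (p+1) with hQdef
        set s := r (p+1) with hs
        set t := r p with htdef
        set a := qNum q (p+2) with ha
        set b := qNum q (p+1) with hbdef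
        have haP : a • P = (q ^ (p+1)) • (Q * Q) - b • (Q * t * Q) := by
          rw [hP, smul_smul, mul_inv_cancel₀ hk1, one_smul]
          simp only [mul_sub, sub_mul, mul_smul_comm, smul_mul_assoc, mul_one]
        have hQsP : Q * (s * P) = s * P := by rw [← mul_assoc, ← hQr.eq, mul_assoc, hQP]
        have X1 : a • (P * (s * P)) = (q ^ (p+1)) • (s * P) - b • (Q * (t * (s * P))) := by
          rw [← smul_mul_assoc, haP]
          simp only [sub_mul, smul_mul_assoc, mul_assoc, hQsP]
        have X2 : s * (Q * (t * (s * P))) = (-q⁻¹) • (Q * (t * (s * P))) := by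
          have : t * (s * (t * P)) = s * (t * (s * P)) := by
            simpa only [mul_assoc] using congrArg (fun z => z * P) hb
          rw [← mul_assoc, hQr.eq, mul_assoc, ← this, ht]
          simp only [mul_smul_comm]
        have X3 : s * (s * P) = (q - q⁻¹) • (s * P) + P := by
          rw [← mul_assoc, hk, add_mul, smul_mul_assoc, one_mul]
        have X4 : a • (s * (P * (s * P)))
            = (q ^ (p+1)) • (s * (s * P)) + (q⁻¹ * b) • (Q * (t * (s * P))) := by
          rw [← mul_smul_comm, X1, mul_sub, mul_smul_comm, mul_smul_comm, X2, smul_smul]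
          module
        have X5 : b • (Q * (t * (s * P))) = (q ^ (p+1)) • (s * P) - a • (P * (s * P)) := by
          rw [X1]; abel
        rw [mul_smul, X5, X3] at X4
        show s * ((qNum q (p+1+2))⁻¹ • (P * ((q ^ (p+1+1)) • (1:B) - a • s) * P))
          = (-q⁻¹) • ((qNum q (p+1+2))⁻¹ • (P * ((q ^ (p+1+1)) • (1:B) - a • s) * P))
        have X6 : P * ((q ^ (p+1+1)) • (1:B) - a • s) * P
            = (q ^ (p+1+1)) • P - a • (P * (s * P)) := by
          simp only [mul_sub, sub_mul, mul_smul_comm, smul_mul_assoc, mul_one, hPP, mul_assoc]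
        rw [X6, mul_smul_comm, smul_comm (-q⁻¹)]
        congr 1
        rw [mul_sub, mul_smul_comm, mul_smul_comm, X4]
        have hqi : q * q⁻¹ = 1 := mul_inv_cancel₀ hq
        have hpw : q ^ (p+1+1) = q ^ (p+1) * q := pow_succ _ _
        have hpw2 : q⁻¹ * (q ^ (p+1) * q) = q ^ (p+1) := by
          rw [mul_comm, mul_assoc, hqi, mul_one]
        rw [smul_sub (-q⁻¹), smul_smul (-q⁻¹) (q ^ (p+1+1)), hpw, neg_mul, hpw2]
        module

/-- `E_i L_n b = q^{2i} L_n E_i b - c_i E_i b`. -/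
theorem key_dn (H : HRel K q r r') (hq : q ≠ 0) (hqq : q - q⁻¹ ≠ 0) (m d : B)
    (hm : ∀ i, 1 ≤ i → Commute (r i) m) (hd : ∀ i, 1 ≤ i → Commute (r i) d)
    (hdd : 1 < K → r' 0 * d * r' 0 * d = d * r' 0 * d * r' 0)
    (hp : 1 < K → d * r 0 * m = r 0 * m * r' 0 * d * r' 0 + 1)
    (n : ℕ) (hn : n < K) (b : B) (hb : ∀ j, j < n → r j * b = (-q⁻¹) • b) (i : ℕ) (hi : i ≤ n) :
    dn r r' d i * (cp r r' (m * d) n * b)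
      = (q ^ (2 * i)) • (cp r r' (m * d) n * (dn r r' d i * b))
        - (q ^ i * qNum q i) • (dn r r' d i * b) := by
  induction i with
  | zero => simp [dn, qNum]
  | succ i ih =>
    have hb' : ∀ j, i ≤ j → j < n → r j * (dn r r' d i * b) = (-q⁻¹) • (dn r r' d i * b) := by
      intro j h1 h2
      rw [← mul_assoc, (H.r_dn_far d hd i j h1).eq, mul_assoc, hb j h2, mul_smul_comm]
    obtain ⟨l, rfl⟩ := Nat.exists_eq_add_of_le hi
    have hk := H.key hq m d hd i (H.dd d hd hdd i (by omega)) (H.perm m d hm hd hp i (by omega)) l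
      (dn r r' d i * b) hb'
    simp only [dn, mul_assoc]
    rw [ih (by omega), mul_sub, mul_smul_comm, hk, mul_smul_comm, qc_succ q hq hqq,
      show q ^ (2 * (i + 1)) = q ^ (2 * i) * q ^ 2 by rw [mul_add, pow_add]]
    module

theorem capelli_aux (H : HRel K q r r') (hq : q ≠ 0) (hqq : q - q⁻¹ ≠ 0) (m d : B)
    (hm : ∀ i, 1 ≤ i → Commute (r i) m) (hd : ∀ i, 1 ≤ i → Commute (r i) d)
    (hdd : 1 < K → r' 0 * d * r' 0 * d = d * r' 0 * d * r' 0)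
    (hp : 1 < K → d * r 0 * m = r 0 * m * r' 0 * d * r' 0 + 1)
    (n : ℕ) : n ≤ K → (∀ j, 2 ≤ j → j ≤ n → qNum q j ≠ 0) →
    cpl q r r' (m * d) n * asy q r n
      = (q ^ (n * (n - 1))) • (upc r r' m n * (dn r r' d n * asy q r n)) := by
  induction n with
  | zero => intro _ _; simp [cpl, upc, dn]
  | succ n ih =>
    intro hn hqn
    have ih' := ih (by omega) (fun j h1 h2 => hqn j h1 (by omega))
    have hA := H.asy_eig hq hqq (n+1) hn hqn
    have hfix : asy q r n * asy q r (n+1) = asy q r (n+1) :=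
      asy_fix hq hqq _ n (fun j h1 h2 => hqn j h1 (by omega)) (fun j hj => hA j (by omega))
    have hmd : ∀ i, 1 ≤ i → Commute (r i) (m * d) := fun i hi => (hm i hi).mul_right (hd i hi)
    have hc : Commute (asy q r n) (cp r r' (m * d) n + (q ^ n * qNum q n) • (1:B)) :=
      asy_comm _ n (fun j hj => (H.r_cp _ hmd j n (by omega) (by omega) (by omega)).add_right
        ((Commute.one_right _).smul_right _))
    have hk := H.key_dn hq hqq m d hm hd hdd hp n (by omega) (asy q r (n+1))
      (fun j hj => hA j (by omega)) n le_rfl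
    have e1 : dn r r' d n * ((cp r r' (m * d) n + (q ^ n * qNum q n) • (1:B)) * asy q r (n+1))
        = (q ^ (2 * n)) • (cp r r' m n * (dn r r' d (n+1) * asy q r (n+1))) := by
      rw [add_mul, mul_add, hk, H.cp_mul]
      simp only [dn, smul_mul_assoc, one_mul, mul_smul_comm, mul_assoc, sub_add_cancel]
    calc cpl q r r' (m * d) (n+1) * asy q r (n+1)
        = cpl q r r' (m * d) n * ((cp r r' (m * d) n + (q ^ n * qNum q n) • (1:B)) *
            (asy q r n * asy q r (n+1))) := by rw [hfix]; simp only [cpl, mul_assoc]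
      _ = (cpl q r r' (m * d) n * asy q r n) *
            ((cp r r' (m * d) n + (q ^ n * qNum q n) • (1:B)) * asy q r (n+1)) := by
          rw [← mul_assoc _ (asy q r n), ← hc.eq]; simp only [mul_assoc]
      _ = (q ^ (n * (n - 1))) • (upc r r' m n * (dn r r' d n * (asy q r n *
            ((cp r r' (m * d) n + (q ^ n * qNum q n) • (1:B)) * asy q r (n+1))))) := by
          rw [ih']; simp only [smul_mul_assoc, mul_assoc]
      _ = (q ^ (n * (n - 1))) • (upc r r' m n * (dn r r' d n *
            ((cp r r' (m * d) n + (q ^ n * qNum q n) • (1:B)) * asy q r (n+1)))) := by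
          rw [← mul_assoc (asy q r n), hc.eq, mul_assoc, hfix]
      _ = _ := by
          rw [e1, mul_smul_comm, smul_smul, ← pow_add]
          have : n * (n - 1) + 2 * n = (n + 1) * (n + 1 - 1) := by
            cases n with
            | zero => rfl
            | succ n => simp only [Nat.add_sub_cancel]; ring
          rw [this]
          simp only [upc, mul_assoc]

theorem capelli (H : HRel K q r r') (hq : q ≠ 0) (hqq : q - q⁻¹ ≠ 0) (m d : B)
    (hm : ∀ i, 1 ≤ i → Commute (r i) m) (hd : ∀ i, 1 ≤ i → Commute (r i) d)
    (hre : 1 < K → r 0 * m * r 0 * m = m * r 0 * m * r 0)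
    (hdd : 1 < K → r' 0 * d * r' 0 * d = d * r' 0 * d * r' 0)
    (hp : 1 < K → d * r 0 * m = r 0 * m * r' 0 * d * r' 0 + 1)
    (hqn : ∀ j, 2 ≤ j → j ≤ K → qNum q j ≠ 0) :
    asy q r K * cpl q r r' (m * d) K * asy q r K
      = (q ^ (K * (K - 1))) • (asy q r K * upc r r' m K * dn r r' d K) := by
  have h1 : Commute (asy q r K) (upc r r' m K) := asy_comm _ K (fun j hj => by
    obtain ⟨l, hl⟩ := Nat.exists_eq_add_of_le (show j + 2 ≤ K by omega)
    have := H.r_up m hm hre j l hl.ge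
    rwa [← hl] at this)
  have h2 : Commute (asy q r K) (dn r r' d K) := asy_comm _ K (fun j hj => by
    obtain ⟨l, hl⟩ := Nat.exists_eq_add_of_le (show j + 2 ≤ K by omega)
    have := H.r_dn d hd hdd j l hl.ge
    rwa [← hl] at this)
  have h3 : asy q r K * asy q r K = asy q r K :=
    asy_fix hq hqq _ K hqn (H.asy_eig hq hqq K le_rfl hqn)
  rw [mul_assoc, H.capelli_aux hq hqq m d hm hd hdd hp K le_rfl hqn, mul_smul_comm]
  congr 1
  rw [← h2.eq, ← mul_assoc (upc r r' m K), ← h1.eq, ← mul_assoc, ← mul_assoc, h3]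

end HRel
end abstractPart
section concretePart

/-- The window `i, …, i+a-1` of a multi-index. -/
def wres {N a k : ℕ} (i : ℕ) (h : i + a ≤ k) (f : Fin k → Fin N) : Fin a → Fin N :=
  fun y => f ⟨i + y.val, by omega⟩

/-- Embedding of operators on `a` factors as operators on the factors `i, …, i+a-1`. -/
def wemb {N a k : ℕ} {A : Type*} [Ring A] (i : ℕ) (h : i + a ≤ k) (X : TMat N a A) :
    TMat N k A := fun f g =>
  if ∀ x : Fin k, (x.val < i ∨ i + a ≤ x.val) → f x = g x then
    X (wres i h f) (wres i h g) else 0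

/-- Splitting a multi-index into the window and the rest. -/
def wequiv {N a k : ℕ} (i : ℕ) (h : i + a ≤ k) : (Fin k → Fin N) ≃
    (Fin a → Fin N) × ({x : Fin k // x.val < i ∨ i + a ≤ x.val} → Fin N) where
  toFun f := (wres i h f, fun x => f x.1)
  invFun p := fun x => if hx : x.val < i ∨ i + a ≤ x.val then p.2 ⟨x, hx⟩
    else p.1 ⟨x.val - i, by omega⟩
  left_inv f := by
    funext x
    by_cases hx : x.val < i ∨ i + a ≤ x.val
    · simp [hx]
    · simp only [hx, dif_neg, not_false_eq_true, wres]
      congr 1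
      ext
      simp only
      omega
  right_inv p := by
    ext x
    · have : ¬ (i + x.val < i ∨ i + a ≤ i + x.val) := by omega
      simp only [wres, dif_neg this, Nat.add_sub_cancel_left]
    · have := x.2
      simp [this]

theorem wemb_eq {N a k : ℕ} {A : Type*} [Ring A] (i : ℕ) (h : i + a ≤ k) (X : TMat N a A) :
    wemb i h X = (Matrix.blockDiagonal (fun _ => X)).submatrix (wequiv i h) (wequiv i h) := by
  ext f g
  simp only [wemb, Matrix.submatrix_apply, Matrix.blockDiagonal_apply, wequiv, Equiv.coe_fn_mk,
    funext_iff, Subtype.forall]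

theorem wemb_mul {N a k : ℕ} {A : Type*} [Ring A] (i : ℕ) (h : i + a ≤ k) (X Y : TMat N a A) :
    wemb i h (X * Y) = wemb i h X * wemb i h Y := by
  rw [wemb_eq, wemb_eq, wemb_eq, Matrix.submatrix_mul_equiv, ← Matrix.blockDiagonal_mul]

theorem wemb_one {N a k : ℕ} {A : Type*} [Ring A] (i : ℕ) (h : i + a ≤ k) :
    wemb i h (1 : TMat N a A) = 1 := by
  rw [wemb_eq]
  have : (fun _ : {x : Fin k // x.val < i ∨ i + a ≤ x.val} → Fin N => (1 : TMat N a A)) = 1 := rfl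
  rw [this, Matrix.blockDiagonal_one, Matrix.submatrix_one_equiv]

theorem wemb_add {N a k : ℕ} {A : Type*} [Ring A] (i : ℕ) (h : i + a ≤ k) (X Y : TMat N a A) :
    wemb i h (X + Y) = wemb i h X + wemb i h Y := by
  ext f g
  simp only [wemb, Matrix.add_apply]
  split_ifs <;> simp

theorem wemb_smul {N a k : ℕ} {A : Type*} [Ring A] [Algebra ℂ A] (i : ℕ) (h : i + a ≤ k) (c : ℂ)
    (X : TMat N a A) : wemb i h (c • X) = c • wemb i h X := by
  ext f g
  simp only [wemb, Matrix.smul_apply]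
  split_ifs <;> simp

theorem wemb_liftC {N a k : ℕ} {A : Type*} [Ring A] [Algebra ℂ A] (i : ℕ) (h : i + a ≤ k)
    (X : TMat N a ℂ) : wemb i h (liftC A X) = liftC A (wemb i h X) := by
  ext f g
  simp only [wemb, liftC, Matrix.map_apply]
  split_ifs <;> simp

theorem wemb_commute {N a b k : ℕ} {A : Type*} [Ring A] (i j : ℕ) (h : i + a ≤ k)
    (h' : j + b ≤ k) (hij : i + a ≤ j) (X : TMat N a A) (Y : TMat N b A)
    (hXY : ∀ u v s t, X u v * Y s t = Y s t * X u v) :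
    Commute (wemb i h X) (wemb j h' Y) := by
  show wemb i h X * wemb j h' Y = wemb j h' Y * wemb i h X
  ext f g
  rw [Matrix.mul_apply, Matrix.mul_apply]
  have key1 : ∀ f g : Fin k → Fin N,
      ∀ x : Fin k, (fun x : Fin k => if x.val < i + a then g x else f x) x
        = if x.val < i + a then g x else f x := fun _ _ _ => rfl
  let p : Fin k → Fin N := fun x => if i ≤ x.val ∧ x.val < i + a then g x else f x
  let p' : Fin k → Fin N := fun x => if j ≤ x.val ∧ x.val < j + b then g x else f x
  rw [Finset.sum_eq_single p, Finset.sum_eq_single p']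
  · have e1 : wres i h p = wres i h g := by
      funext y; simp only [wres, p]; rw [if_pos]; constructor <;> omega
    have e2 : wres j h' p = wres j h' f := by
      funext y; simp only [wres, p]; rw [if_neg]; omega
    have e3 : wres j h' p' = wres j h' g := by
      funext y; simp only [wres, p']; rw [if_pos]; constructor <;> omega
    have e4 : wres i h p' = wres i h f := by
      funext y; simp only [wres, p']; rw [if_neg]; omega
    have c1 : ∀ x : Fin k, (x.val < i ∨ i + a ≤ x.val) → f x = p x := by
      intro x hx; simp only [p]; rw [if_neg]; omega
    have c2 : ∀ x : Fin k, (x.val < j ∨ j + b ≤ x.val) → f x = p' x := by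
      intro x hx; simp only [p']; rw [if_neg]; omega
    have c3 : (∀ x : Fin k, (x.val < j ∨ j + b ≤ x.val) → p x = g x) ↔
        (∀ x : Fin k, (x.val < i ∨ i + a ≤ x.val) → p' x = g x) := by
      simp only [p, p']
      constructor
      · intro H x hx
        split_ifs with hh
        · rfl
        · have := H x (by omega)
          rwa [if_neg (by omega)] at this
      · intro H x hx
        split_ifs with hh
        · rfl
        · have := H x (by omega)
          rwa [if_neg (by omega)] at this
    simp only [wemb, e1, e2, e3, e4, if_pos c1, if_pos c2, c3]
    split_ifs
    · exact hXY _ _ _ _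
    · simp
  · intro t _ ht
    simp only [wemb]
    by_contra hne
    apply ht
    have a1 : ∀ x : Fin k, (x.val < j ∨ j + b ≤ x.val) → f x = t x := by
      by_contra hc; exact hne (by rw [if_neg hc, zero_mul])
    have a2 : ∀ x : Fin k, (x.val < i ∨ i + a ≤ x.val) → t x = g x := by
      by_contra hc; exact hne (by rw [if_neg hc, mul_zero])
    funext x
    simp only [p']
    split_ifs with hx
    · exact a2 x (by omega)
    · exact (a1 x (by omega)).symm
  · intro hh; exact absurd (Finset.mem_univ _) hh
  · intro t _ ht
    simp only [wemb]
    by_contra hne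
    apply ht
    have a1 : ∀ x : Fin k, (x.val < i ∨ i + a ≤ x.val) → f x = t x := by
      by_contra hc; exact hne (by rw [if_neg hc, zero_mul])
    have a2 : ∀ x : Fin k, (x.val < j ∨ j + b ≤ x.val) → t x = g x := by
      by_contra hc; exact hne (by rw [if_neg hc, mul_zero])
    funext x
    simp only [p]
    split_ifs with hx
    · exact a2 x (by omega)
    · exact (a1 x (by omega)).symm
  · intro hh; exact absurd (Finset.mem_univ _) hh

theorem wemb_embR {N a k : ℕ} (i j : ℕ) (h : i + a ≤ k) (hj : j + 1 < a) (R : RMat N) :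
    wemb i h (embR a R j) = embR k R (i + j) := by
  ext f g
  have hk : i + j + 1 < k := by omega
  simp only [wemb, embR, dif_pos hj, dif_pos hk]
  rw [← ite_and]
  refine if_congr ?_ rfl rfl
  constructor
  · rintro ⟨h1, h2⟩ x hx1 hx2
    by_cases hx : x.val < i ∨ i + a ≤ x.val
    · exact h1 x hx
    · have := h2 ⟨x.val - i, by omega⟩ (by simp only; omega) (by simp only; omega)
      simp only [wres] at this
      have e : (⟨i + (x.val - i), by omega⟩ : Fin k) = x := by ext; simp only; omega
      simpa only [e] using this
  · intro H
    refine ⟨fun x hx => H x (by omega) (by omega), fun y h1 h2 => H _ ?_ ?_⟩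
    · simp only; omega
    · simp only; omega

theorem wemb_emb1 {N a k : ℕ} {A : Type*} [Ring A] (h : 0 + a ≤ k) (ha : 0 < a)
    (X : Matrix (Fin N) (Fin N) A) :
    wemb 0 h (emb1 a X) = emb1 k X := by
  ext f g
  have hk : 0 < k := by omega
  simp only [wemb, emb1, dif_pos ha, dif_pos hk]
  rw [← ite_and]
  have e0 : ∀ x : Fin k, (⟨0 + x.val, by omega⟩ : Fin k) = x := by intro x; ext; simp
  refine if_congr ?_ rfl rfl
  constructor
  · rintro ⟨h1, h2⟩ x hx1
    by_cases hx : x.val < 0 ∨ 0 + a ≤ x.val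
    · exact h1 x hx
    · have := h2 ⟨x.val, by omega⟩ (by simp only; omega)
      simp only [wres] at this
      simpa only [e0] using this
  · intro H
    refine ⟨fun x hx => H x (by omega), fun y h1 => H _ ?_⟩
    simp only; omega

/-- `ℂ^N ⊗ ℂ^N` as functions on `Fin 2`. -/
def pairEquiv (N : ℕ) : (Fin 2 → Fin N) ≃ Fin N × Fin N where
  toFun f := (f 0, f 1)
  invFun p := ![p.1, p.2]
  left_inv f := by ext x; fin_cases x <;> rfl
  right_inv p := rfl

theorem embR_two {N : ℕ} (R : RMat N) :
    embR 2 R 0 = R.submatrix (pairEquiv N) (pairEquiv N) := by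
  ext f g
  simp only [embR, Matrix.submatrix_apply]
  rw [dif_pos (by omega), if_pos]
  · rfl
  · intro j h1 h2; omega

theorem emb1_one {N : ℕ} {A : Type*} [Ring A] (X : Matrix (Fin N) (Fin N) A) :
    emb1 1 X = X.submatrix (Equiv.funUnique (Fin 1) (Fin N)) (Equiv.funUnique (Fin 1) (Fin N)) := by
  ext f g
  simp only [emb1, Matrix.submatrix_apply]
  rw [dif_pos (by omega), if_pos]
  · rfl
  · intro j h1; omega

theorem embR_out {N k i : ℕ} (R : RMat N) (h : ¬ i + 1 < k) : embR k R i = 1 := by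
  ext f g
  simp only [embR, dif_neg h]

theorem embR_mul {N : ℕ} (k i : ℕ) (R S : RMat N) (h : R * S = 1) :
    embR k R i * embR k S i = 1 := by
  by_cases hi : i + 1 < k
  · have e := fun R : RMat N => wemb_embR i 0 (show i + 2 ≤ k by omega) (by omega) R
    simp only [add_zero] at e
    rw [← e, ← e, ← wemb_mul, embR_two, embR_two, Matrix.submatrix_mul_equiv, h,
      Matrix.submatrix_one_equiv, wemb_one]
  · rw [embR_out _ hi, embR_out _ hi, one_mul]

theorem embR_hecke {N : ℕ} (k i : ℕ) (hi : i + 1 < k) (R : RMat N) (c : ℂ)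
    (h : R * R = c • R + 1) :
    embR k R i * embR k R i = c • embR k R i + 1 := by
  have e := wemb_embR i 0 (show i + 2 ≤ k by omega) (by omega) R
  simp only [add_zero] at e
  rw [← e, ← wemb_mul, embR_two, Matrix.submatrix_mul_equiv, h, ← wemb_smul,
    ← wemb_one i (show i + 2 ≤ k by omega), ← wemb_add]
  congr 1
  rw [Matrix.submatrix_add, Matrix.submatrix_smul, Pi.add_apply, Pi.add_apply, Pi.smul_apply,
    Pi.smul_apply, Matrix.submatrix_one_equiv]

theorem liftC_mul {N k : ℕ} (A : Type*) [Ring A] [Algebra ℂ A] (X Y : TMat N k ℂ) :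
    liftC A (X * Y) = liftC A X * liftC A Y := Matrix.map_mul

theorem liftC_one {N k : ℕ} (A : Type*) [Ring A] [Algebra ℂ A] :
    liftC A (1 : TMat N k ℂ) = 1 := Matrix.map_one _ (map_zero _) (map_one _)

theorem liftC_add {N k : ℕ} (A : Type*) [Ring A] [Algebra ℂ A] (X Y : TMat N k ℂ) :
    liftC A (X + Y) = liftC A X + liftC A Y := by
  ext; simp [liftC]

theorem liftC_sub {N k : ℕ} (A : Type*) [Ring A] [Algebra ℂ A] (X Y : TMat N k ℂ) :
    liftC A (X - Y) = liftC A X - liftC A Y := by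
  ext; simp [liftC]

theorem liftC_smul {N k : ℕ} (A : Type*) [Ring A] [Algebra ℂ A] (c : ℂ) (X : TMat N k ℂ) :
    liftC A (c • X) = c • liftC A X := by
  ext; simp only [liftC, Matrix.map_apply, Matrix.smul_apply, smul_eq_mul, map_mul]
  rw [Algebra.smul_def]

theorem concrete_comm {N k : ℕ} (A : Type*) [Ring A] [Algebra ℂ A] (R : RMat N) (i j : ℕ)
    (hij : i + 1 < j) :
    Commute (liftC A (embR k R i)) (liftC A (embR k R j)) := by
  by_cases hj : j + 1 < k
  · have e := fun i (hi : i + 1 < k) => wemb_embR i 0 (show i + 2 ≤ k by omega) (by omega) R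
    simp only [add_zero] at e
    rw [← e i (by omega), ← e j hj, ← wemb_liftC, ← wemb_liftC]
    refine wemb_commute i j _ _ (by omega) _ _ ?_
    intro u v s t
    exact Algebra.commutes _ _
  · rw [embR_out R hj, liftC_one]; exact Commute.one_right _

theorem concrete_comm1 {N k : ℕ} (A : Type*) [Ring A] [Algebra ℂ A] (R : RMat N) (i : ℕ)
    (hi : 1 ≤ i) (X : Matrix (Fin N) (Fin N) A) :
    Commute (liftC A (embR k R i)) (emb1 k X) := by
  by_cases hj : i + 1 < k
  · have e := fun i (hi : i + 1 < k) => wemb_embR i 0 (show i + 2 ≤ k by omega) (by omega) R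
    simp only [add_zero] at e
    rw [← e i (by omega), ← wemb_liftC, ← wemb_emb1 (show 0 + 1 ≤ k by omega) (by omega) X]
    refine (wemb_commute 0 i _ _ (by omega) _ _ ?_).symm
    intro u v s t
    exact (Algebra.commutes _ _).symm
  · rw [embR_out R hj, liftC_one]; exact Commute.one_left _

theorem emb1_mul {N k : ℕ} {A : Type*} [Ring A] (hk : 1 ≤ k) (X Y : Matrix (Fin N) (Fin N) A) :
    emb1 k (X * Y) = emb1 k X * emb1 k Y := by
  have e := fun X : Matrix (Fin N) (Fin N) A =>
    wemb_emb1 (show 0 + 1 ≤ k by omega) (by omega) X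
  rw [← e, ← e, ← e, ← wemb_mul, emb1_one, emb1_one, emb1_one, Matrix.submatrix_mul_equiv]

theorem concrete_HRel {N k : ℕ} (A : Type*) [Ring A] [Algebra ℂ A] (R Rinv : RMat N) (q : ℂ)
    (hq0 : q ≠ 0) (hinv : R * Rinv = 1) (hinv' : Rinv * R = 1)
    (hbr : IsBraiding R) (hH : HeckeCond R q) :
    HRel k q (fun i => liftC A (embR k R i)) (fun i => liftC A (embR k Rinv i)) where
  inv i := by rw [← liftC_mul, embR_mul k i R Rinv hinv, liftC_one]
  inv' i := by rw [← liftC_mul, embR_mul k i Rinv R hinv', liftC_one]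
  comm i j hij := concrete_comm A R i j hij
  braid i hi := by
    have h := congrArg (wemb i (show i + 3 ≤ k by omega)) hbr
    simp only [wemb_mul] at h
    rw [wemb_embR i 0 _ (by omega), wemb_embR i 1 _ (by omega)] at h
    simp only [← liftC_mul]
    exact congrArg (liftC A) h
  hecke i hi := by
    have hRR : R * R = (q - q⁻¹) • R + 1 := by
      have h := hH
      unfold HeckeCond at h
      simp only [sub_mul, mul_add, smul_mul_assoc, mul_smul_comm, one_mul, mul_one] at h
      have e : q⁻¹ • q • (1 : RMat N) = 1 := by rw [smul_smul, inv_mul_cancel₀ hq0, one_smul]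
      rw [smul_sub, e] at h
      rw [← sub_eq_zero, ← neg_eq_zero, ← h, sub_smul]
      abel
    have h := congrArg (liftC A) (embR_hecke k i hi R (q - q⁻¹) hRR)
    simpa only [liftC_mul, liftC_add, liftC_smul, liftC_one] using h

theorem copyX_eq {N k : ℕ} {A : Type*} [Ring A] [Algebra ℂ A] (R Rinv : RMat N)
    (X : Matrix (Fin N) (Fin N) A) (n : ℕ) :
    copyX k R Rinv X n = cp (fun i => liftC A (embR k R i)) (fun i => liftC A (embR k Rinv i))
      (emb1 k X) n := by
  induction n with
  | zero => rfl
  | succ n ih => simp only [copyX, cp, ih]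

theorem upChain_eq {N k : ℕ} {A : Type*} [Ring A] [Algebra ℂ A] (R Rinv : RMat N)
    (X : Matrix (Fin N) (Fin N) A) (n : ℕ) :
    upChain k R Rinv X n = upc (fun i => liftC A (embR k R i)) (fun i => liftC A (embR k Rinv i))
      (emb1 k X) n := by
  induction n with
  | zero => rfl
  | succ n ih =>
    rw [upc, ← ih, ← copyX_eq]
    simp [upChain, List.range_succ]

theorem downChain_eq {N k : ℕ} {A : Type*} [Ring A] [Algebra ℂ A] (R Rinv : RMat N)
    (X : Matrix (Fin N) (Fin N) A) (n : ℕ) :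
    downChain k R Rinv X n = dn (fun i => liftC A (embR k R i)) (fun i => liftC A (embR k Rinv i))
      (emb1 k X) n := by
  induction n with
  | zero => rfl
  | succ n ih =>
    rw [dn, ← ih, ← copyX_eq]
    simp [downChain, List.range_succ]

theorem capChainA_eq {N k : ℕ} {A : Type*} [Ring A] [Algebra ℂ A] (R Rinv : RMat N) (q : ℂ)
    (X : Matrix (Fin N) (Fin N) A) (n : ℕ) :
    capChainA k R Rinv q X n = cpl q (fun i => liftC A (embR k R i))
      (fun i => liftC A (embR k Rinv i)) (emb1 k X) n := by
  induction n with
  | zero => rfl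
  | succ n ih =>
    rw [cpl, ← ih, ← copyX_eq]
    simp [capChainA, List.range_succ]

theorem Asym_eq {N k : ℕ} (A : Type*) [Ring A] [Algebra ℂ A] (R : RMat N) (q : ℂ) (n : ℕ) :
    liftC A (Asym k R q n) = asy q (fun i => liftC A (embR k R i)) n := by
  induction n with
  | zero => exact liftC_one A
  | succ n ih =>
    cases n with
    | zero => exact liftC_one A
    | succ n =>
      rw [Asym, asy, ← ih]
      simp only [liftC_smul, liftC_mul, liftC_sub, liftC_one]

end concretePart

/-- matrix Capelli identity, skew-symmetric form:
`A^(k) L_{1̄}(L_{2̄}+qI)⋯(L_{k̄}+q^{k−1}(k−1)_q I) A^(k)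
  = q^{k(k−1)} A^(k) M_{1̄}⋯M_{k̄} D_{k̄}⋯D_{1̄}`, with `L = MD`. -/
theorem statement2 {N : ℕ} (R Rinv : RMat N) (q : ℂ)
    (hq0 : q ≠ 0) (hq1 : q ≠ 1) (hqm1 : q ≠ -1)
    (hinv : R * Rinv = 1) (hinv' : Rinv * R = 1)
    (hbr : IsBraiding R) (hH : HeckeCond R q)
    {A : Type _} [Ring A] [Algebra ℂ A]
    (M D : Matrix (Fin N) (Fin N) A)
    (hRE : RERel R M) (hDD : DDRel Rinv D) (hperm : PermRel R Rinv M D) :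
    ∀ k : ℕ, 1 ≤ k → (∀ j : ℕ, 2 ≤ j → j ≤ k → qNum q j ≠ 0) →
      liftC A (Asym k R q k) * capChainA k R Rinv q (M * D) k * liftC A (Asym k R q k)
        = (q ^ (k * (k - 1))) •
            (liftC A (Asym k R q k) * upChain k R Rinv M k * downChain k R Rinv D k) := by
  intro k hk hqn
  have hqq : q - q⁻¹ ≠ 0 := by
    intro h
    have h1 : q * q = 1 := by
      have : q = q⁻¹ := sub_eq_zero.mp h
      nth_rewrite 2 [this]
      exact mul_inv_cancel₀ hq0
    rcases mul_self_eq_one_iff.mp h1 with h2 | h2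
    · exact hq1 h2
    · exact hqm1 h2
  have H := concrete_HRel (k := k) A R Rinv q hq0 hinv hinv' hbr hH
  rw [Asym_eq, capChainA_eq, upChain_eq, downChain_eq, emb1_mul hk]
  have t1 : ∀ (h2 : 0 + 2 ≤ k) (S : RMat N),
      wemb 0 h2 (liftC A (embR 2 S 0)) = liftC A (embR k S 0) := by
    intro h2 S
    rw [wemb_liftC, wemb_embR 0 0 h2 (by omega)]
  have t2 : ∀ (h2 : 0 + 2 ≤ k) (X : Matrix (Fin N) (Fin N) A),
      wemb 0 h2 (emb1 2 X) = emb1 k X := fun h2 X => wemb_emb1 h2 (by omega) X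
  refine H.capelli hq0 hqq (emb1 k M) (emb1 k D) (fun i hi => concrete_comm1 A R i hi M)
    (fun i hi => concrete_comm1 A R i hi D) ?_ ?_ ?_ hqn
  · intro h2
    have h := congrArg (wemb 0 (show 0 + 2 ≤ k by omega)) hRE
    simpa only [wemb_mul, t1, t2] using h
  · intro h2
    have h := congrArg (wemb 0 (show 0 + 2 ≤ k by omega)) hDD
    simpa only [wemb_mul, t1, t2] using h
  · intro h2
    have h := congrArg (wemb 0 (show 0 + 2 ≤ k by omega)) hperm
    simpa only [wemb_mul, wemb_add, wemb_one, t1, t2] using h
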